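/- Fix α > 0 and δ ∈ (0,1). Under assumptions (A1)–(A6), with probability at least 1−δ over the datasets, the PRO-RL output ŵ satisfies ‖ŵ − w*_α‖_{2,d^D} ≤ √(4·ε_stat/(α·M_f)), and consequently ‖d̂ − d*_α‖₁ ≤ √(4·ε_stat/(α·M_f)), where d̂(s,a) = ŵ(s,a)·d^D(s,a) and ‖·‖₁ is the total (entrywise) ℓ₁ norm over S×A. -/

import Mathlib

open MeasureTheory
open scoped BigOperators ENNReal

namespace ProRL

/-- The discrete measure on a type induced by a real-valued weight function. -/
noncomputable def discMeasure {X : Type*} [MeasurableSpace X] (p : X → ℝ) : Measure X :=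
  Measure.sum fun x => ENNReal.ofReal (p x) • Measure.dirac x

variable {S A : Type*} [Fintype S] [Fintype A]

/-- The `t`-step state-action distribution of policy `π` started from `μ0`. -/
noncomputable def saDist (P : S → A → S → ℝ) (μ0 : S → ℝ) (π : S → A → ℝ) :
    ℕ → S → A → ℝ
  | 0 => fun s a => μ0 s * π s a
  | t + 1 => fun s a =>
      (∑ s' : S, ∑ a' : A, saDist P μ0 π t s' a' * P s' a' s) * π s a

/-- The discounted state-action occupancy `d^π(s,a)`. -/
noncomputable def occ (P : S → A → S → ℝ) (μ0 : S → ℝ) (γ : ℝ) (π : S → A → ℝ)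
    (s : S) (a : A) : ℝ :=
  (1 - γ) * ∑' t : ℕ, γ ^ t * saDist P μ0 π t s a

/-- The (normalized) expected discounted return `J(π) = E_{d^π}[r]`. -/
noncomputable def Jret (P : S → A → S → ℝ) (r : S → A → ℝ) (μ0 : S → ℝ) (γ : ℝ)
    (π : S → A → ℝ) : ℝ :=
  ∑ s : S, ∑ a : A, occ P μ0 γ π s a * r s a

/-- `π` is a (stationary, stochastic) policy. -/
def IsPolicy (π : S → A → ℝ) : Prop :=
  (∀ s a, 0 ≤ π s a) ∧ ∀ s, ∑ a : A, π s a = 1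

/-- The Bellman residual `e_v(s,a) = r(s,a) + γ ∑_{s'} P(s'|s,a) v(s') − v(s)`. -/
noncomputable def eV (P : S → A → S → ℝ) (r : S → A → ℝ) (γ : ℝ) (v : S → ℝ)
    (s : S) (a : A) : ℝ :=
  r s a + γ * ∑ s' : S, P s a s' * v s' - v s

/-- The population Lagrangian `L_α(v,w)`. -/
noncomputable def Lag (P : S → A → S → ℝ) (r : S → A → ℝ) (μ0 : S → ℝ) (γ : ℝ)
    (dD : S → A → ℝ) (f : ℝ → ℝ) (α : ℝ) (v : S → ℝ) (w : S → A → ℝ) : ℝ :=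
  (1 - γ) * ∑ s : S, μ0 s * v s
    - α * ∑ s : S, ∑ a : A, dD s a * f (w s a)
    + ∑ s : S, ∑ a : A, dD s a * (w s a * eV P r γ v s a)

/-- The empirical Lagrangian `L̂_α(v,w)` built from the transition dataset `D`
(`D i = ((sᵢ,aᵢ), s'ᵢ)`, with `rᵢ = r sᵢ aᵢ`) and initial-state dataset `D0`. -/
noncomputable def empLag (r : S → A → ℝ) (γ : ℝ) (f : ℝ → ℝ) (α : ℝ) {n n0 : ℕ}
    (D : Fin n → (S × A) × S) (D0 : Fin n0 → S) (v : S → ℝ) (w : S → A → ℝ) : ℝ :=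
  (1 - γ) * ((n0 : ℝ)⁻¹ * ∑ j : Fin n0, v (D0 j))
    - α * ((n : ℝ)⁻¹ * ∑ i : Fin n, f (w (D i).1.1 (D i).1.2))
    + (n : ℝ)⁻¹ * ∑ i : Fin n,
        w (D i).1.1 (D i).1.2 *
          (r (D i).1.1 (D i).1.2 + γ * v (D i).2 - v (D i).1.1)

/-- Per-state normalization of a state-action weight into a policy
(uniform where the state marginal is not positive). -/
noncomputable def normPolicy (d : S → A → ℝ) (s : S) (a : A) : ℝ :=
  if 0 < ∑ a' : A, d s a' then d s a / ∑ a' : A, d s a'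
  else (Fintype.card A : ℝ)⁻¹

/-- Policy extraction from a density ratio `w` and a behavior policy `piD`
(uniform where the normalizer vanishes). -/
noncomputable def extractPolicy (piD w : S → A → ℝ) (s : S) (a : A) : ℝ :=
  if 0 < ∑ a' : A, w s a' * piD s a' then
    w s a * piD s a / ∑ a' : A, w s a' * piD s a'
  else (Fintype.card A : ℝ)⁻¹

/-- Behavior policy `π_D(a|s)` obtained from the data distribution `d^D`. -/
noncomputable def behPolicy (dD : S → A → ℝ) : S → A → ℝ := normPolicy dD

/-- The state-action measure `d(s,a) = w(s,a)·d^D(s,a)`. -/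
noncomputable def dstar (dD w : S → A → ℝ) : S → A → ℝ := fun s a => w s a * dD s a

/-- The weighted `L²(d^D)` norm of a state-action function. -/
noncomputable def l2nrm (dD g : S → A → ℝ) : ℝ :=
  Real.sqrt (∑ s : S, ∑ a : A, dD s a * g s a ^ 2)

/-- `‖π(·|s) − π'(·|s)‖₁`. -/
noncomputable def l1Pol (π π' : S → A → ℝ) (s : S) : ℝ := ∑ a : A, |π s a - π' s a|

/-- `E_{s ∼ d}[‖π(·|s) − π'(·|s)‖₁]` where `d` is a state-action distribution. -/
noncomputable def expL1 (d π π' : S → A → ℝ) : ℝ :=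
  ∑ s : S, (∑ a : A, d s a) * l1Pol π π' s

/-- The statistical error term `ε_stat`. -/
noncomputable def epsStat (γ α Bv Bf Bw Be δ : ℝ) (nV nW n n0 : ℕ) : ℝ :=
  (1 - γ) * Bv * Real.sqrt (2 * Real.log (4 * (nV : ℝ) / δ) / (n0 : ℝ))
    + (α * Bf + Bw * Be) *
        Real.sqrt (2 * Real.log (4 * ((nV : ℝ) * (nW : ℝ)) / δ) / (n : ℝ))

/-- The Bellman flow equations for a state-action measure `d`. -/
def BellmanFlow (P : S → A → S → ℝ) (μ0 : S → ℝ) (γ : ℝ) (d : S → A → ℝ) : Prop :=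
  ∀ s : S, ∑ a : A, d s a
    = (1 - γ) * μ0 s + γ * ∑ s' : S, ∑ a' : A, P s' a' s * d s' a'

/-- `(v,w)` is a saddle point of `max_{w ≥ 0} min_v L_α(v,w)`. -/
def IsSaddle (P : S → A → S → ℝ) (r : S → A → ℝ) (μ0 : S → ℝ) (γ : ℝ)
    (dD : S → A → ℝ) (f : ℝ → ℝ) (α : ℝ) (v : S → ℝ) (w : S → A → ℝ) : Prop :=
  (∀ s a, 0 ≤ w s a) ∧
  (∀ v' : S → ℝ, Lag P r μ0 γ dD f α v w ≤ Lag P r μ0 γ dD f α v' w) ∧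
  (∀ w' : S → A → ℝ, (∀ s a, 0 ≤ w' s a) →
    Lag P r μ0 γ dD f α v w' ≤ Lag P r μ0 γ dD f α v w)

/-- `(v,w)` is a saddle point of `max_{0 ≤ w ≤ Bw} min_v L_α(v,w)` (constrained LP). -/
def IsSaddleB (P : S → A → S → ℝ) (r : S → A → ℝ) (μ0 : S → ℝ) (γ : ℝ)
    (dD : S → A → ℝ) (f : ℝ → ℝ) (α Bw : ℝ) (v : S → ℝ) (w : S → A → ℝ) : Prop :=
  (∀ s a, 0 ≤ w s a ∧ w s a ≤ Bw) ∧
  (∀ v' : S → ℝ, Lag P r μ0 γ dD f α v w ≤ Lag P r μ0 γ dD f α v' w) ∧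
  (∀ w' : S → A → ℝ, (∀ s a, 0 ≤ w' s a ∧ w' s a ≤ Bw) →
    Lag P r μ0 γ dD f α v w' ≤ Lag P r μ0 γ dD f α v w)

/-- `(vhat, what)` is an exact max-min point of the empirical Lagrangian over `V × W`:
`vhat ∈ argmin_{v ∈ V} L̂(v, what)` and `what ∈ argmax_{w ∈ W} min_{v ∈ V} L̂(v, w)`. -/
def IsProRLOutput (r : S → A → ℝ) (γ : ℝ) (f : ℝ → ℝ) (α : ℝ)
    (V : Finset (S → ℝ)) (W : Finset (S → A → ℝ)) {n n0 : ℕ}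
    (D : Fin n → (S × A) × S) (D0 : Fin n0 → S)
    (vhat : S → ℝ) (what : S → A → ℝ) : Prop :=
  vhat ∈ V ∧ what ∈ W ∧
  (∀ v ∈ V, empLag r γ f α D D0 vhat what ≤ empLag r γ f α D D0 v what) ∧
  ∀ w ∈ W, ∀ vw ∈ V,
    (∀ v ∈ V, empLag r γ f α D D0 vw w ≤ empLag r γ f α D D0 v w) →
      empLag r γ f α D D0 vw w ≤ empLag r γ f α D D0 vhat what

/-- Weight of a transition tuple `((s,a),s')` under `(s,a) ∼ d^D`, `s' ∼ P(·|s,a)`. -/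
noncomputable def tupleWeight (P : S → A → S → ℝ) (dD : S → A → ℝ)
    (x : (S × A) × S) : ℝ :=
  dD x.1.1 x.1.2 * P x.1.1 x.1.2 x.2

/-- The joint law of the transition dataset `D` (i.i.d. from `d^D ⊗ P`) and the
initial-state dataset `D0` (i.i.d. from `μ0`). -/
noncomputable def dataMeasure [MeasurableSpace S] [MeasurableSpace A]
    (P : S → A → S → ℝ) (dD : S → A → ℝ) (μ0 : S → ℝ) (n n0 : ℕ) :
    Measure ((Fin n → (S × A) × S) × (Fin n0 → S)) :=
  (Measure.pi fun _ : Fin n => discMeasure (tupleWeight P dD)).prod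
    (Measure.pi fun _ : Fin n0 => discMeasure μ0)

/-- The joint law of datasets `D1`, `D2` (both i.i.d. from `d^D ⊗ P`) and `D0`
(i.i.d. from `μ0`), used by PRO-RL-BC. -/
noncomputable def dataMeasure3 [MeasurableSpace S] [MeasurableSpace A]
    (P : S → A → S → ℝ) (dD : S → A → ℝ) (μ0 : S → ℝ) (n1 n2 n0 : ℕ) :
    Measure ((Fin n1 → (S × A) × S) × (Fin n2 → (S × A) × S) × (Fin n0 → S)) :=
  (Measure.pi fun _ : Fin n1 => discMeasure (tupleWeight P dD)).prod
    ((Measure.pi fun _ : Fin n2 => discMeasure (tupleWeight P dD)).prod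
      (Measure.pi fun _ : Fin n0 => discMeasure μ0))

/-- `v` is the optimal value function: it satisfies the Bellman optimality equation. -/
def IsOptValue [Nonempty A] (P : S → A → S → ℝ) (r : S → A → ℝ) (γ : ℝ)
    (v : S → ℝ) : Prop :=
  ∀ s : S, v s = Finset.univ.sup' Finset.univ_nonempty
    (fun a : A => r s a + γ * ∑ s' : S, P s a s' * v s')

/-- Basic assumptions on the MDP, the regularizer-free data, and the data distribution. -/
structure MDPAssumptions (P : S → A → S → ℝ) (r : S → A → ℝ) (μ0 : S → ℝ) (γ : ℝ)
    (dD : S → A → ℝ) : Prop where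
  P_nonneg : ∀ s a s', 0 ≤ P s a s'
  P_sum : ∀ s a, ∑ s' : S, P s a s' = 1
  r_nonneg : ∀ s a, 0 ≤ r s a
  r_le_one : ∀ s a, r s a ≤ 1
  γ_nonneg : 0 ≤ γ
  γ_lt_one : γ < 1
  μ0_pos : ∀ s, 0 < μ0 s
  μ0_sum : ∑ s : S, μ0 s = 1
  dD_nonneg : ∀ s a, 0 ≤ dD s a
  dD_sum : ∑ s : S, ∑ a : A, dD s a = 1

/-- Regularity of the regularizer `f`: continuously differentiable with derivative `f'`,
`M_f`-strongly convex, and with `|f'| ≤ Bf'`, `|f| ≤ Bf` on `[0, Bw]`. -/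
structure RegAssumptions (f f' : ℝ → ℝ) (Mf Bw Bf' Bf : ℝ) : Prop where
  deriv : ∀ x, HasDerivAt f (f' x) x
  strong : StrongConvexOn Set.univ Mf f
  Mf_pos : 0 < Mf
  f'_bdd : ∀ x, 0 ≤ x → x ≤ Bw → |f' x| ≤ Bf'
  f_bdd : ∀ x, 0 ≤ x → x ≤ Bw → |f x| ≤ Bf

/-- `w` is an optimal density ratio of the unregularized LP (the set `W*₀`). -/
def OptRatio (P : S → A → S → ℝ) (r : S → A → ℝ) (μ0 : S → ℝ) (γ : ℝ)
    (dD : S → A → ℝ) (w : S → A → ℝ) : Prop :=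
  (∀ s a, 0 ≤ w s a) ∧ BellmanFlow P μ0 γ (dstar dD w) ∧
  ∀ w' : S → A → ℝ, (∀ s a, 0 ≤ w' s a) → BellmanFlow P μ0 γ (dstar dD w') →
    ∑ s : S, ∑ a : A, dstar dD w' s a * r s a
      ≤ ∑ s : S, ∑ a : A, dstar dD w s a * r s a

section Concentration

open ProbabilityTheory

variable {X : Type*} [MeasurableSpace X]

/-- **Hoeffding's inequality**, upper tail of an empirical mean of a bounded function. -/
lemma measureReal_pi_empiricalMean_sub_integral_gt_le {ν : Measure X} [IsProbabilityMeasure ν]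
    {g : X → ℝ} (hg : Measurable g) {B : ℝ} (hB : ∀ x, |g x| ≤ B) {k : ℕ} (hk : 0 < k)
    {L : ℝ} (hL : 0 ≤ L) :
    (Measure.pi fun _ : Fin k => ν).real
      {x | B * Real.sqrt (2 * L / k) < (k : ℝ)⁻¹ * ∑ i, g (x i) - ∫ y, g y ∂ν}
      ≤ Real.exp (-L) := by
  obtain ⟨x₀⟩ := nonempty_of_isProbabilityMeasure ν
  have hk' : (0 : ℝ) < k := by exact_mod_cast hk
  rcases ((abs_nonneg _).trans (hB x₀)).eq_or_lt with hB0 | hBpos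
  · have hg0 : ∀ x, g x = 0 := fun x => abs_nonpos_iff.1 (hB0 ▸ hB x)
    simp [hg0, ← hB0, Real.exp_nonneg]
  · have hindep : iIndepFun (fun (i : Fin k) (x : Fin k → X) => g (x i) - ∫ y, g y ∂ν)
        (Measure.pi fun _ : Fin k => ν) :=
      iIndepFun_pi (μ := fun _ : Fin k => ν) (X := fun _ y => g y - ∫ y, g y ∂ν)
        fun _ => (hg.sub_const _).aemeasurable
    have hsub : ∀ i ∈ (Finset.univ : Finset (Fin k)),
        HasSubgaussianMGF (fun x : Fin k → X => g (x i) - ∫ y, g y ∂ν)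
          ((‖B - -B‖₊ / 2) ^ 2) (Measure.pi fun _ : Fin k => ν) := by
      intro i _
      have h := hasSubgaussianMGF_of_mem_Icc (μ := ν) hg.aemeasurable
        (ae_of_all _ fun x => abs_le.1 (hB x))
      have hmp := measurePreserving_eval (fun _ : Fin k => ν) i
      rw [← hmp.map_eq] at h
      have h' := h.of_map hmp.measurable.aemeasurable
      rw [hmp.map_eq] at h'
      exact h'
    have hε : 0 ≤ k * (B * Real.sqrt (2 * L / k)) := by positivity
    have key := HasSubgaussianMGF.measure_sum_ge_le_of_iIndepFun hindep hsub hε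
    refine (measureReal_mono ?_).trans (key.trans_eq ?_)
    · intro x hx
      simp only [Set.mem_ofPred_eq, Finset.sum_sub_distrib, Finset.sum_const, Finset.card_univ,
        Fintype.card_fin, nsmul_eq_mul] at hx ⊢
      have h := mul_le_mul_of_nonneg_left hx.le hk'.le
      rwa [mul_sub, mul_inv_cancel_left₀ hk'.ne'] at h
    · congr 1
      have hn : ((‖B - -B‖₊ / 2 : NNReal) : ℝ) = B := by
        rw [NNReal.coe_div, coe_nnnorm, Real.norm_of_nonneg (by linarith)]
        simp
      simp only [Finset.sum_const, Finset.card_univ, Fintype.card_fin, nsmul_eq_mul,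
        NNReal.coe_mul, NNReal.coe_natCast, NNReal.coe_pow, hn]
      rw [mul_pow, mul_pow, Real.sq_sqrt (by positivity)]
      field_simp

/-- **Hoeffding's inequality** for an empirical mean of a bounded function, two-sided. -/
lemma measure_pi_abs_empiricalMean_sub_integral_gt_le {ν : Measure X} [IsProbabilityMeasure ν]
    {g : X → ℝ} (hg : Measurable g) {B : ℝ} (hB : ∀ x, |g x| ≤ B) {k : ℕ} (hk : 0 < k)
    {L : ℝ} (hL : 0 ≤ L) :
    (Measure.pi fun _ : Fin k => ν)
      {x | B * Real.sqrt (2 * L / k) < |(k : ℝ)⁻¹ * ∑ i, g (x i) - ∫ y, g y ∂ν|}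
      ≤ ENNReal.ofReal (2 * Real.exp (-L)) := by
  have h₁ := measureReal_pi_empiricalMean_sub_integral_gt_le (ν := ν) hg hB hk hL
  have h₂ := measureReal_pi_empiricalMean_sub_integral_gt_le (ν := ν) hg.neg
    (B := B) (by simpa using hB) hk hL
  rw [← ofReal_measureReal]
  refine ENNReal.ofReal_le_ofReal ?_
  refine (measureReal_mono ?_).trans ((measureReal_union_le _ _).trans
    ((add_le_add h₁ h₂).trans_eq (two_mul _).symm))
  intro x hx
  rw [Set.mem_ofPred_eq] at hx
  rcases lt_abs.1 hx with h | h
  · exact Or.inl h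
  · refine Or.inr ?_
    simp only [Set.mem_ofPred_eq, Pi.neg_apply, Finset.sum_neg_distrib, integral_neg]
    linarith

/-- A uniform version of Hoeffding's inequality over a finite family of bounded functions. -/
lemma measure_pi_exists_abs_empiricalMean_sub_integral_gt_le {ν : Measure X}
    [IsProbabilityMeasure ν] {ι : Type*} {I : Finset ι} (hI : I.Nonempty) {g : ι → X → ℝ}
    (hg : ∀ i ∈ I, Measurable (g i)) {B : ℝ} (hB : ∀ i ∈ I, ∀ x, |g i x| ≤ B) {k : ℕ}
    (hk : 0 < k) {δ : ℝ} (hδ0 : 0 < δ) (hδ1 : δ < 1) :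
    (Measure.pi fun _ : Fin k => ν)
      {x | ∃ i ∈ I, B * Real.sqrt (2 * Real.log (4 * (I.card : ℝ) / δ) / k)
        < |(k : ℝ)⁻¹ * ∑ j, g i (x j) - ∫ y, g i y ∂ν|}
      ≤ ENNReal.ofReal (δ / 2) := by
  have hc : (1 : ℝ) ≤ I.card := by exact_mod_cast hI.card_pos
  have hL : 0 ≤ Real.log (4 * (I.card : ℝ) / δ) := by
    refine Real.log_nonneg ?_
    rw [le_div_iff₀ hδ0]
    linarith
  have hexp : 2 * Real.exp (-Real.log (4 * (I.card : ℝ) / δ)) = δ / 2 / I.card := by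
    rw [Real.exp_neg, Real.exp_log (by positivity)]
    field_simp
    norm_num
  have hset : {x : Fin k → X | ∃ i ∈ I, B * Real.sqrt (2 * Real.log (4 * (I.card : ℝ) / δ) / k)
        < |(k : ℝ)⁻¹ * ∑ j, g i (x j) - ∫ y, g i y ∂ν|}
      = ⋃ i ∈ I, {x | B * Real.sqrt (2 * Real.log (4 * (I.card : ℝ) / δ) / k)
        < |(k : ℝ)⁻¹ * ∑ j, g i (x j) - ∫ y, g i y ∂ν|} := by
    ext x
    simp
  rw [hset]
  refine (measure_biUnion_finset_le _ _).trans ((Finset.sum_le_sum fun i hi =>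
    measure_pi_abs_empiricalMean_sub_integral_gt_le (hg i hi) (hB i hi) hk hL).trans_eq ?_)
  rw [hexp, Finset.sum_const, nsmul_eq_mul, ← ENNReal.ofReal_natCast,
    ← ENNReal.ofReal_mul (by positivity)]
  congr 1
  field_simp

end Concentration

section DiscreteMeasure

variable {X : Type*} [Fintype X] [MeasurableSpace X] {p : X → ℝ}

lemma isProbabilityMeasure_discMeasure (h0 : ∀ x, 0 ≤ p x)
    (h1 : ∑ x, p x = 1) : IsProbabilityMeasure (discMeasure p) := by
  constructor
  rw [discMeasure, Measure.sum_apply _ MeasurableSet.univ, tsum_fintype]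
  simp [← ENNReal.ofReal_sum_of_nonneg fun x _ => h0 x, h1]

lemma integral_discMeasure [MeasurableSingletonClass X] (h0 : ∀ x, 0 ≤ p x) (g : X → ℝ) :
    ∫ x, g x ∂discMeasure p = ∑ x, p x * g x := by
  rw [discMeasure, Measure.sum_fintype, integral_finsetSum_measure]
  · simp [integral_smul_measure, ENNReal.toReal_ofReal (h0 _)]
  · intro x _
    exact (integrable_dirac (by simp)).smul_measure ENNReal.ofReal_ne_top

end DiscreteMeasure

section Deterministic

/-- The `w`-maximizer of the Lagrangian satisfies quadratic growth, by strong convexity. -/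
lemma IsSaddle.quadratic_growth {P : S → A → S → ℝ} {r : S → A → ℝ} {μ0 : S → ℝ} {γ : ℝ}
    {dD : S → A → ℝ} {f : ℝ → ℝ} {α Mf : ℝ} {v : S → ℝ} {w : S → A → ℝ}
    (h : IsSaddle P r μ0 γ dD f α v w) (hα : 0 < α) (hdD : ∀ s a, 0 ≤ dD s a)
    (hf : StrongConvexOn Set.univ Mf f) {w' : S → A → ℝ} (hw' : ∀ s a, 0 ≤ w' s a) :
    α * Mf / 2 * ∑ s, ∑ a, dD s a * (w' s a - w s a) ^ 2
      ≤ Lag P r μ0 γ dD f α v w - Lag P r μ0 γ dD f α v w' := by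
  set Q := ∑ s, ∑ a, dD s a * (w' s a - w s a) ^ 2 with hQ
  set G := Lag P r μ0 γ dD f α v w - Lag P r μ0 γ dD f α v w' with hG
  have hstep : ∀ t ∈ Set.Ioo (0 : ℝ) 1, α * Mf / 2 * Q * (1 - t) ≤ G := by
    rintro t ⟨ht0, ht1⟩
    have hmax := h.2.2 (fun s a => (1 - t) * w s a + t * w' s a) fun s a =>
      add_nonneg (mul_nonneg (by linarith) (h.1 s a)) (mul_nonneg ht0.le (hw' s a))
    have hconv : ∑ s, ∑ a, dD s a * f ((1 - t) * w s a + t * w' s a)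
        ≤ (1 - t) * ∑ s, ∑ a, dD s a * f (w s a) + t * ∑ s, ∑ a, dD s a * f (w' s a)
          - (1 - t) * t * (Mf / 2) * Q := by
      rw [hQ]
      simp only [Finset.mul_sum, ← Finset.sum_add_distrib, ← Finset.sum_sub_distrib]
      refine Finset.sum_le_sum fun s _ => Finset.sum_le_sum fun a _ => ?_
      have hpt := hf.2 (Set.mem_univ (w s a)) (Set.mem_univ (w' s a))
        (sub_nonneg.2 ht1.le) ht0.le (by ring)
      simp only [smul_eq_mul, Real.norm_eq_abs, sq_abs] at hpt
      have := mul_le_mul_of_nonneg_left hpt (hdD s a)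
      linarith
    have hlin : ∑ s, ∑ a, dD s a * (((1 - t) * w s a + t * w' s a) * eV P r γ v s a)
        = (1 - t) * ∑ s, ∑ a, dD s a * (w s a * eV P r γ v s a)
          + t * ∑ s, ∑ a, dD s a * (w' s a * eV P r γ v s a) := by
      simp only [Finset.mul_sum, ← Finset.sum_add_distrib]
      refine Finset.sum_congr rfl fun s _ => Finset.sum_congr rfl fun a _ => ?_
      ring
    have hαconv := mul_le_mul_of_nonneg_left hconv hα.le
    refine le_of_mul_le_mul_left ?_ ht0
    simp only [hG, Lag] at hmax ⊢
    rw [hlin] at hmax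
    linarith
  have htend : Filter.Tendsto (fun t : ℝ => α * Mf / 2 * Q * (1 - t))
      (nhdsWithin 0 (Set.Ioi 0)) (nhds (α * Mf / 2 * Q)) := by
    have hc : Continuous fun t : ℝ => α * Mf / 2 * Q * (1 - t) := by fun_prop
    simpa using (hc.tendsto 0).mono_left nhdsWithin_le_nhds
  exact le_of_tendsto htend
    (Filter.eventually_of_mem (Ioo_mem_nhdsGT zero_lt_one) hstep)

/-- A uniform approximation of the Lagrangian makes the empirical output nearly optimal. -/
lemma IsProRLOutput.lag_sub_le {P : S → A → S → ℝ} {r : S → A → ℝ} {μ0 : S → ℝ} {γ : ℝ}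
    {dD : S → A → ℝ} {f : ℝ → ℝ} {α ε : ℝ} {vst : S → ℝ} {wst : S → A → ℝ}
    {V : Finset (S → ℝ)} {W : Finset (S → A → ℝ)} {n n0 : ℕ}
    {D : Fin n → (S × A) × S} {D0 : Fin n0 → S} {vhat : S → ℝ} {what : S → A → ℝ}
    (h : IsProRLOutput r γ f α V W D D0 vhat what)
    (hsad : IsSaddle P r μ0 γ dD f α vst wst) (hv : vst ∈ V) (hw : wst ∈ W)
    (hε : ∀ v ∈ V, ∀ w ∈ W,
      |empLag r γ f α D D0 v w - Lag P r μ0 γ dD f α v w| ≤ ε) :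
    Lag P r μ0 γ dD f α vst wst - Lag P r μ0 γ dD f α vst what ≤ 2 * ε := by
  obtain ⟨-, hwhat, hmin, hmax⟩ := h
  obtain ⟨u, hu, humin⟩ :=
    V.exists_min_image (fun v => empLag r γ f α D D0 v wst) ⟨vst, hv⟩
  have h₁ := (abs_le.1 (hε vst hv what hwhat)).2
  have h₂ := hmin vst hv
  have h₃ := hmax wst hw u hu humin
  have h₄ := (abs_le.1 (hε u hu wst hw)).1
  have h₅ := hsad.2.1 u
  linarith

/-- The `ℓ¹` norm of a reweighted difference is bounded by the weighted `L²` norm. -/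
lemma sum_abs_mul_sub_mul_le_l2nrm {dD : S → A → ℝ} (hdD : ∀ s a, 0 ≤ dD s a)
    (hsum : ∑ s, ∑ a, dD s a = 1) (w w' : S → A → ℝ) :
    ∑ s, ∑ a, |w s a * dD s a - w' s a * dD s a|
      ≤ l2nrm dD (fun s a => w s a - w' s a) := by
  set m := ∑ s, ∑ a, dD s a * |w s a - w' s a| with hm
  have habs : ∑ s, ∑ a, |w s a * dD s a - w' s a * dD s a| = m := by
    refine Finset.sum_congr rfl fun s _ => Finset.sum_congr rfl fun a _ => ?_
    rw [← sub_mul, abs_mul, abs_of_nonneg (hdD s a), mul_comm]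
  have hvar : 0 ≤ ∑ s, ∑ a, dD s a * (|w s a - w' s a| - m) ^ 2 :=
    Finset.sum_nonneg fun s _ => Finset.sum_nonneg fun a _ =>
      mul_nonneg (hdD s a) (sq_nonneg _)
  have hexpand : ∑ s, ∑ a, dD s a * (|w s a - w' s a| - m) ^ 2
      = ∑ s, ∑ a, dD s a * (w s a - w' s a) ^ 2 - 2 * m * m
        + m ^ 2 * ∑ s, ∑ a, dD s a := by
    nth_rw 3 [hm]
    simp only [Finset.mul_sum, ← Finset.sum_add_distrib, ← Finset.sum_sub_distrib]
    refine Finset.sum_congr rfl fun s _ => Finset.sum_congr rfl fun a _ => ?_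
    rw [← sq_abs (w s a - w' s a)]
    ring
  rw [habs, l2nrm]
  refine Real.le_sqrt_of_sq_le ?_
  rw [hsum] at hexpand
  linarith

end Deterministic

section Sampling

/-- The contribution of one transition tuple to the empirical Lagrangian. -/
noncomputable def tupleTerm (r : S → A → ℝ) (γ : ℝ) (f : ℝ → ℝ) (α : ℝ) (v : S → ℝ)
    (w : S → A → ℝ) (x : (S × A) × S) : ℝ :=
  w x.1.1 x.1.2 * (r x.1.1 x.1.2 + γ * v x.2 - v x.1.1) - α * f (w x.1.1 x.1.2)

lemma empLag_eq {S A : Type*} (r : S → A → ℝ) (γ : ℝ) (f : ℝ → ℝ) (α : ℝ) {n n0 : ℕ}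
    (D : Fin n → (S × A) × S) (D0 : Fin n0 → S) (v : S → ℝ) (w : S → A → ℝ) :
    empLag r γ f α D D0 v w = (1 - γ) * ((n0 : ℝ)⁻¹ * ∑ j, v (D0 j))
      + (n : ℝ)⁻¹ * ∑ i, tupleTerm r γ f α v w (D i) := by
  simp only [empLag, tupleTerm, Finset.sum_sub_distrib, ← Finset.mul_sum]
  ring

lemma sum_tupleWeight_mul_tupleTerm {P : S → A → S → ℝ} {r : S → A → ℝ} {μ0 : S → ℝ} {γ : ℝ}
    {dD : S → A → ℝ} (hMDP : MDPAssumptions P r μ0 γ dD) (f : ℝ → ℝ) (α : ℝ) (v : S → ℝ)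
    (w : S → A → ℝ) :
    (1 - γ) * ∑ s, μ0 s * v s + ∑ x, tupleWeight P dD x * tupleTerm r γ f α v w x
      = Lag P r μ0 γ dD f α v w := by
  have hinner : ∀ s a, ∑ s', tupleWeight P dD ((s, a), s') * tupleTerm r γ f α v w ((s, a), s')
      = dD s a * (w s a * eV P r γ v s a) - α * (dD s a * f (w s a)) := by
    intro s a
    have hterm : ∀ s', tupleWeight P dD ((s, a), s') * tupleTerm r γ f α v w ((s, a), s')
        = dD s a * (w s a * (r s a - v s) - α * f (w s a)) * P s a s'
          + dD s a * w s a * γ * (P s a s' * v s') := by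
      intro s'
      simp only [tupleWeight, tupleTerm]
      ring
    simp only [hterm, Finset.sum_add_distrib, ← Finset.mul_sum, hMDP.P_sum, eV]
    ring
  simp only [Fintype.sum_prod_type, hinner, Finset.sum_sub_distrib, ← Finset.mul_sum, Lag]
  ring

lemma abs_tupleTerm_le {P : S → A → S → ℝ} {r : S → A → ℝ} {μ0 : S → ℝ} {γ : ℝ}
    {dD : S → A → ℝ} (hMDP : MDPAssumptions P r μ0 γ dD) {f : ℝ → ℝ} {α Bw Bf Bv : ℝ}
    (hα : 0 ≤ α) {v : S → ℝ} {w : S → A → ℝ} (hv : ∀ s, |v s| ≤ Bv)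
    (hw : ∀ s a, 0 ≤ w s a ∧ w s a ≤ Bw) (hf : ∀ x, 0 ≤ x → x ≤ Bw → |f x| ≤ Bf)
    (x : (S × A) × S) :
    |tupleTerm r γ f α v w x| ≤ α * Bf + Bw * ((1 + γ) * Bv + 1) := by
  obtain ⟨⟨s, a⟩, s'⟩ := x
  have hfb := mul_le_mul_of_nonneg_left (hf _ (hw s a).1 (hw s a).2) hα
  have hγv := mul_le_mul_of_nonneg_left (hv s') hMDP.γ_nonneg
  have hr : |r s a| ≤ 1 := abs_le.2 ⟨by linarith [hMDP.r_nonneg s a], hMDP.r_le_one s a⟩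
  have he : |r s a + γ * v s' - v s| ≤ (1 + γ) * Bv + 1 := by
    calc |r s a + γ * v s' - v s| ≤ |r s a| + γ * |v s'| + |v s| := by
          refine (abs_sub _ _).trans (add_le_add_left ((abs_add_le _ _).trans_eq ?_) _)
          rw [abs_mul, abs_of_nonneg hMDP.γ_nonneg]
      _ ≤ (1 + γ) * Bv + 1 := by linarith [hv s]
  have hwe : |w s a| * |r s a + γ * v s' - v s| ≤ Bw * ((1 + γ) * Bv + 1) :=
    mul_le_mul (by rw [abs_of_nonneg (hw s a).1]; exact (hw s a).2) he (abs_nonneg _)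
      ((hw s a).1.trans (hw s a).2)
  calc |tupleTerm r γ f α v w ((s, a), s')|
      ≤ |w s a * (r s a + γ * v s' - v s)| + |α * f (w s a)| := abs_sub _ _
    _ ≤ α * Bf + Bw * ((1 + γ) * Bv + 1) := by
      rw [abs_mul, abs_mul, abs_of_nonneg hα]
      linarith

lemma sum_tupleWeight {P : S → A → S → ℝ} {r : S → A → ℝ} {μ0 : S → ℝ} {γ : ℝ}
    {dD : S → A → ℝ} (hMDP : MDPAssumptions P r μ0 γ dD) : ∑ x, tupleWeight P dD x = 1 := by
  simp only [Fintype.sum_prod_type, tupleWeight, ← Finset.mul_sum, hMDP.P_sum, mul_one,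
    hMDP.dD_sum]

/-- With probability at least `1 - δ`, the empirical Lagrangian is uniformly close to the
population Lagrangian. -/
lemma dataMeasure_uniform_lag_le [MeasurableSpace S] [MeasurableSpace A]
    [MeasurableSingletonClass S] [MeasurableSingletonClass A]
    {P : S → A → S → ℝ} {r : S → A → ℝ} {μ0 : S → ℝ} {γ : ℝ} {dD : S → A → ℝ}
    (hMDP : MDPAssumptions P r μ0 γ dD) {f : ℝ → ℝ} {α δ Bw Bf Bv Be : ℝ} (hα : 0 ≤ α)
    (hδ0 : 0 < δ) (hδ1 : δ < 1) (hBe : Be = (1 + γ) * Bv + 1)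
    {V : Finset (S → ℝ)} {W : Finset (S → A → ℝ)} (hVne : V.Nonempty) (hWne : W.Nonempty)
    (hV : ∀ v ∈ V, ∀ s, |v s| ≤ Bv) (hW : ∀ w ∈ W, ∀ s a, 0 ≤ w s a ∧ w s a ≤ Bw)
    (hf : ∀ x, 0 ≤ x → x ≤ Bw → |f x| ≤ Bf) {n n0 : ℕ} (hn : 0 < n) (hn0 : 0 < n0) :
    1 - ENNReal.ofReal δ ≤ dataMeasure P dD μ0 n n0 {ω | ∀ v ∈ V, ∀ w ∈ W,
      |empLag r γ f α ω.1 ω.2 v w - Lag P r μ0 γ dD f α v w|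
        ≤ epsStat γ α Bv Bf Bw Be δ V.card W.card n n0} := by
  have htw0 : ∀ x, 0 ≤ tupleWeight P dD x := fun x =>
    mul_nonneg (hMDP.dD_nonneg _ _) (hMDP.P_nonneg _ _ _)
  have hμ0 : ∀ s, 0 ≤ μ0 s := fun s => (hMDP.μ0_pos s).le
  have hprob : IsProbabilityMeasure (discMeasure (tupleWeight P dD)) :=
    isProbabilityMeasure_discMeasure htw0 (sum_tupleWeight hMDP)
  have hprob0 : IsProbabilityMeasure (discMeasure μ0) :=
    isProbabilityMeasure_discMeasure hμ0 hMDP.μ0_sum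
  have hdev := measure_pi_exists_abs_empiricalMean_sub_integral_gt_le
    (ν := discMeasure (tupleWeight P dD)) (hVne.product hWne)
    (g := fun vw => tupleTerm r γ f α vw.1 vw.2) (B := α * Bf + Bw * Be)
    (fun _ _ => measurable_of_countable _)
    (fun vw hvw x => by
      rw [Finset.mem_product] at hvw
      exact hBe ▸ abs_tupleTerm_le hMDP hα (hV _ hvw.1) (hW _ hvw.2) hf x) hn hδ0 hδ1
  have hdev0 := measure_pi_exists_abs_empiricalMean_sub_integral_gt_le
    (ν := discMeasure μ0) hVne (g := fun v => v) (B := Bv)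
    (fun _ _ => measurable_of_countable _) hV hn0 hδ0 hδ1
  simp only [integral_discMeasure htw0, Finset.card_product, Nat.cast_mul] at hdev
  simp only [integral_discMeasure hμ0] at hdev0
  set E := {x : Fin n → (S × A) × S | ∃ i ∈ V ×ˢ W, (α * Bf + Bw * Be)
    * Real.sqrt (2 * Real.log (4 * ((V.card : ℝ) * W.card) / δ) / n)
      < |(n : ℝ)⁻¹ * ∑ j, tupleTerm r γ f α i.1 i.2 (x j)
        - ∑ x, tupleWeight P dD x * tupleTerm r γ f α i.1 i.2 x|} with hE
  set E0 := {x : Fin n0 → S | ∃ v ∈ V, Bv * Real.sqrt (2 * Real.log (4 * (V.card : ℝ) / δ) / n0)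
      < |(n0 : ℝ)⁻¹ * ∑ j, v (x j) - ∑ x, μ0 x * v x|} with hE0
  have hprobD : IsProbabilityMeasure (dataMeasure P dD μ0 n n0) := by
    unfold dataMeasure
    infer_instance
  have hbad : dataMeasure P dD μ0 n n0 (Prod.fst ⁻¹' E ∪ Prod.snd ⁻¹' E0)
      ≤ ENNReal.ofReal δ := by
    have hEm : MeasurableSet E := E.to_countable.measurableSet
    have hE0m : MeasurableSet E0 := E0.to_countable.measurableSet
    refine (measure_union_le _ _).trans ?_
    rw [dataMeasure, measurePreserving_fst.measure_preimage hEm.nullMeasurableSet,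
      measurePreserving_snd.measure_preimage hE0m.nullMeasurableSet]
    refine (add_le_add hdev hdev0).trans_eq ?_
    rw [← ENNReal.ofReal_add (by positivity) (by positivity), add_halves]
  calc 1 - ENNReal.ofReal δ
      ≤ 1 - dataMeasure P dD μ0 n n0 (Prod.fst ⁻¹' E ∪ Prod.snd ⁻¹' E0) :=
        tsub_le_tsub_left hbad _
    _ = dataMeasure P dD μ0 n n0 (Prod.fst ⁻¹' E ∪ Prod.snd ⁻¹' E0)ᶜ :=
        (prob_compl_eq_one_sub (Set.to_countable _).measurableSet).symm
    _ ≤ _ := by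
        refine measure_mono fun ω hω v hv w hw => ?_
        simp only [Set.compl_union, Set.mem_inter_iff, Set.mem_compl_iff, Set.mem_preimage, hE,
          hE0, Set.mem_ofPred_eq, not_exists, not_and, not_lt] at hω
        have h := hω.1 (v, w) (Finset.mem_product.2 ⟨hv, hw⟩)
        have h0 := mul_le_mul_of_nonneg_left (hω.2 v hv) (sub_nonneg.2 hMDP.γ_lt_one.le)
        rw [abs_le] at h
        rw [← abs_of_nonneg (sub_nonneg.2 hMDP.γ_lt_one.le), ← abs_mul,
          abs_of_nonneg (sub_nonneg.2 hMDP.γ_lt_one.le), abs_le] at h0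
        rw [empLag_eq, ← sum_tupleWeight_mul_tupleTerm hMDP, epsStat, abs_le]
        constructor <;> linarith [h.1, h.2, h0.1, h0.2]

end Sampling

/-- Lemma 8: `‖ŵ − w*_α‖_{2,d^D} ≤ √(4 ε_stat/(α M_f))` and
`‖d̂ − d*_α‖₁ ≤ √(4 ε_stat/(α M_f))`. -/
theorem stmt16
    {S A : Type*} [Fintype S] [Fintype A] [Nonempty S] [Nonempty A]
    [MeasurableSpace S] [MeasurableSpace A]
    [MeasurableSingletonClass S] [MeasurableSingletonClass A]
    (P : S → A → S → ℝ) (r : S → A → ℝ) (μ0 : S → ℝ) (γ : ℝ) (dD : S → A → ℝ)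
    (hMDP : MDPAssumptions P r μ0 γ dD)
    (f f' : ℝ → ℝ) (α δ : ℝ) (hα : 0 < α) (hδ0 : 0 < δ) (hδ1 : δ < 1)
    (Mf Bw Bf' Bf Bv Be : ℝ)
    (hreg : RegAssumptions f f' Mf Bw Bf' Bf) (hfnn : ∀ x, 0 ≤ f x)
    (hBv : Bv = (α * Bf' + 1) / (1 - γ)) (hBe : Be = (1 + γ) * Bv + 1)
    (vst : S → ℝ) (wst : S → A → ℝ)
    (hsad : IsSaddle P r μ0 γ dD f α vst wst)
    (V : Finset (S → ℝ)) (W : Finset (S → A → ℝ))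
    (hA1 : ∀ s a, dstar dD wst s a ≤ Bw * dD s a)
    (hA2 : vst ∈ V) (hA3 : wst ∈ W)
    (hA4 : ∀ w ∈ W, ∀ s a, 0 ≤ w s a ∧ w s a ≤ Bw)
    (hA6 : ∀ v ∈ V, ∀ s, |v s| ≤ Bv)
    (n n0 : ℕ) (hn : 0 < n) (hn0 : 0 < n0)
    (vhat : (Fin n → (S × A) × S) × (Fin n0 → S) → S → ℝ)
    (what : (Fin n → (S × A) × S) × (Fin n0 → S) → S → A → ℝ)
    (halg : ∀ ω, IsProRLOutput r γ f α V W ω.1 ω.2 (vhat ω) (what ω)) :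
    1 - ENNReal.ofReal δ ≤
      dataMeasure P dD μ0 n n0 {ω |
        l2nrm dD (fun s a => what ω s a - wst s a)
          ≤ Real.sqrt (4 * epsStat γ α Bv Bf Bw Be δ V.card W.card n n0 / (α * Mf)) ∧
        (∑ s : S, ∑ a : A, |what ω s a * dD s a - wst s a * dD s a|)
          ≤ Real.sqrt (4 * epsStat γ α Bv Bf Bw Be δ V.card W.card n n0 / (α * Mf)) } := by
  refine (dataMeasure_uniform_lag_le hMDP hα.le hδ0 hδ1 hBe ⟨vst, hA2⟩ ⟨wst, hA3⟩ hA6 hA4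
    hreg.f_bdd hn hn0).trans (measure_mono fun ω hω => ?_)
  have hopt := (halg ω).lag_sub_le hsad hA2 hA3 hω
  have hgrowth := hsad.quadratic_growth hα hMDP.dD_nonneg hreg.strong
    fun s a => (hA4 _ (halg ω).2.1 s a).1
  have hl2 : l2nrm dD (fun s a => what ω s a - wst s a)
      ≤ Real.sqrt (4 * epsStat γ α Bv Bf Bw Be δ V.card W.card n n0 / (α * Mf)) := by
    refine Real.sqrt_le_sqrt ?_
    rw [le_div_iff₀ (mul_pos hα hreg.Mf_pos)]
    linarith
  exact ⟨hl2, (sum_abs_mul_sub_mul_le_l2nrm hMDP.dD_nonneg hMDP.dD_sum _ _).trans hl2⟩
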